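/- Let k be an algebraic closure of 𝔽₂ and K = k(t) the rational function field over k. The group of points of the Weierstrass curve W : y² + (t²+1)xy + t²y = x³ + t²x² over K is isomorphic, as an abelian group, to ℤ/10ℤ. -/

import Mathlib

/-- An algebraic closure `k` of `𝔽₂`. -/
noncomputable abbrev k : Type := AlgebraicClosure (ZMod 2)

/-- The rational function field `K = k(t)`. -/
noncomputable abbrev K : Type := RatFunc k

/-- The variable `t` of `K = k(t)`. -/
noncomputable def t : K := RatFunc.X

/-- The Weierstrass curve `W : y² + (t²+1)xy + t²y = x³ + t²x²` over `K`. -/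
noncomputable def W : WeierstrassCurve.Affine K :=
  { a₁ := t ^ 2 + 1, a₂ := t ^ 2, a₃ := t ^ 2, a₄ := 0, a₆ := 0 }

/-!
Write `E s` for the Tate normal form `y² + (s+1)xy + sy = x³ + sx²`, in which `(0, 0)` has order
five; the curve in question is `E (t²)`, the Frobenius twist of `E t`.

Solving the equation of `E t` for `t` gives `t = (x³ - y² - xy) / (xy + y - x²)`, so over any field
the surface swept out by `E t` is birational to the `(x, y)`-plane. The denominator vanishes on the
generic curve only at `(0, 0)`; hence the coordinate ring of the generic curve away from `(0, 0)` is
a localization of a polynomial ring, so factorial, every invertible ideal of the full coordinate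
ring is a power of the ideal of `(0, 0)` up to principal ideals, and every point of `E t` is a
multiple of `(0, 0)`.

In characteristic two, doubling on `E (t²)` is Verschiebung to `E t` followed by Frobenius. Hence
`2 • Q` is a multiple of `(0, 0)` for every point `Q` of `E (t²)`, and the kernel of doubling is
generated by a single point of order two.
-/

open Polynomial
open scoped Polynomial.Bivariate

section InvertibleIdeals

variable {R : Type*} [CommRing R]

theorem span_singleton_dvd_of_le {c : R} {A : Ideal R} (hA : A ≤ Ideal.span {c}) :
    Ideal.span {c} ∣ A := by
  refine ⟨Submodule.comap (LinearMap.mulLeft R c) A, le_antisymm (fun a ha ↦ ?_) ?_⟩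
  · obtain ⟨b, rfl⟩ := Ideal.mem_span_singleton.mp (hA ha)
    exact Ideal.mem_span_singleton_mul.mpr ⟨b, ha, rfl⟩
  · exact Ideal.span_singleton_mul_le_iff.mpr fun b hb ↦ hb

variable [IsDomain R] {I J : Ideal R} {c : R}

theorem mul_le_mul_left_iff_of_mul_eq_span (hc : c ≠ 0) (hIJ : I * J = Ideal.span {c})
    {A B : Ideal R} : I * A ≤ I * B ↔ A ≤ B := by
  refine ⟨fun h ↦ (Ideal.span_singleton_mul_right_mono hc).mp ?_, fun h ↦ Ideal.mul_mono_right h⟩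
  rw [← hIJ, mul_comm I J, mul_assoc, mul_assoc]
  exact Ideal.mul_mono_right h

theorem dvd_of_le_of_mul_eq_span (hc : c ≠ 0) (hIJ : I * J = Ideal.span {c})
    {A : Ideal R} (hA : A ≤ I) : I ∣ A := by
  obtain ⟨B, hB⟩ : Ideal.span {c} ∣ J * A := by
    refine span_singleton_dvd_of_le ?_
    rw [← hIJ, mul_comm I J]
    exact Ideal.mul_mono_right hA
  refine ⟨B, (Ideal.span_singleton_mul_right_inj hc).mp ?_⟩
  rw [← hIJ, mul_assoc, hB, ← hIJ]
  ring

theorem exists_eq_pow_of_pow_le {p p' : Ideal R} [hp_max : p.IsMaximal] (hc : c ≠ 0)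
    (hp : p * p' = Ideal.span {c}) {n : ℕ} {A : Ideal R} (hA : p ^ n ≤ A) :
    ∃ j : ℕ, A = p ^ j := by
  induction n generalizing A with
  | zero => exact ⟨0, le_antisymm (by simp) hA⟩
  | succ n ih =>
    obtain rfl | hA_top := eq_or_ne A ⊤
    · exact ⟨0, by rw [pow_zero, Ideal.one_eq_top]⟩
    obtain ⟨m, hm, hAm⟩ := Ideal.exists_le_maximal A hA_top
    obtain rfl : p = m := hp_max.eq_of_le hm.ne_top (hm.isPrime.le_of_pow_le (hA.trans hAm))
    obtain ⟨B, rfl⟩ := dvd_of_le_of_mul_eq_span hc hp hAm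
    rw [pow_succ', mul_le_mul_left_iff_of_mul_eq_span hc hp] at hA
    obtain ⟨j, rfl⟩ := ih hA
    exact ⟨j + 1, (pow_succ' p j).symm⟩

theorem exists_mem_map_eq_span_of_ufm (S : Type*) [CommRing S] [Algebra R S]
    [UniqueFactorizationMonoid S] (M : Submonoid R) [IsLocalization M S]
    (hM : M ≤ nonZeroDivisors R) (hc : c ≠ 0) (hIJ : I * J = Ideal.span {c}) :
    ∃ d ∈ I, I.map (algebraMap R S) = Ideal.span {algebraMap R S d} := by
  have : IsDomain S := IsLocalization.isDomain_of_le_nonZeroDivisors S hM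
  have hprincipal : (I.map (algebraMap R S)).IsPrincipal := by
    refine IsGCDMonoid.isPrincipal_of_exists_mul_ne_zero_isPrincipal
      ⟨J.map (algebraMap R S), ?_, ?_⟩ <;>
    rw [← Ideal.map_mul, hIJ, Ideal.map_span, Set.image_singleton]
    · rwa [Ne, Ideal.zero_eq_bot, Ideal.span_singleton_eq_bot,
        map_eq_zero_iff _ (IsLocalization.injective S hM)]
    · exact ⟨_, rfl⟩
  obtain ⟨δ, hδ⟩ := hprincipal
  have hmem : δ ∈ I.map (algebraMap R S) := hδ ▸ Ideal.mem_span_singleton_self δ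
  obtain ⟨⟨⟨d, hd⟩, s⟩, hds⟩ := (IsLocalization.mem_map_algebraMap_iff M S).mp hmem
  refine ⟨d, hd, ?_⟩
  rw [← hds, Ideal.span_singleton_mul_right_unit (IsLocalization.map_units S s), hδ]

theorem exists_mul_eq_span_of_ufm_away (S : Type*) [CommRing S] [Algebra R S]
    [UniqueFactorizationMonoid S] {g : R} [IsLocalization.Away g S] (hg : g ≠ 0) (hc : c ≠ 0)
    (hIJ : I * J = Ideal.span {c}) :
    ∃ d ≠ 0, ∃ A : Ideal R, I * A = Ideal.span {d} ∧ g ∈ A.radical := by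
  have hM := powers_le_nonZeroDivisors_of_noZeroDivisors hg
  have : IsDomain S := IsLocalization.isDomain_of_le_nonZeroDivisors S hM
  obtain ⟨d, hdI, hd⟩ := exists_mem_map_eq_span_of_ufm S _ hM hc hIJ
  obtain ⟨d', hdJ, hd'⟩ := exists_mem_map_eq_span_of_ufm S _ hM hc ((mul_comm J I).trans hIJ)
  obtain ⟨u, hu⟩ : c ∣ d * d' := by
    rw [← Ideal.mem_span_singleton, ← hIJ]
    exact Ideal.mul_mem_mul hdI hdJ
  have hu_unit : IsUnit (algebraMap R S u) := by
    refine isUnit_of_associated_mul (p := algebraMap R S c) ?_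
      (map_ne_zero_iff _ (IsLocalization.injective S hM) |>.mpr hc)
    rw [← map_mul, ← hu, map_mul, ← Ideal.span_singleton_eq_span_singleton,
      ← Ideal.span_singleton_mul_span_singleton, ← hd, ← hd', ← Ideal.map_mul, hIJ,
      Ideal.map_span, Set.image_singleton]
  obtain ⟨m, hum⟩ := (IsLocalization.Away.algebraMap_isUnit_iff g).mp hu_unit
  obtain ⟨A, hA⟩ := dvd_of_le_of_mul_eq_span hc hIJ ((Ideal.span_singleton_le_iff_mem I).mpr hdI)
  have huA : u ∈ A := by
    have hmem : d * d' ∈ Ideal.span {c} * A := by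
      rw [← hIJ, mul_right_comm, ← hA]
      exact Ideal.mul_mem_mul (Ideal.mem_span_singleton_self d) hdJ
    obtain ⟨a, ha, hau⟩ := Ideal.mem_span_singleton_mul.mp (hu ▸ hmem)
    rwa [← mul_left_cancel₀ hc hau]
  refine ⟨d, ?_, A, hA.symm, m, A.mem_of_dvd hum huA⟩
  rintro rfl
  rw [zero_mul, eq_comm, mul_eq_zero, or_iff_right hc] at hu
  exact not_isUnit_zero (map_zero (algebraMap R S) ▸ hu ▸ hu_unit)

theorem exists_mul_pow_eq_span (S : Type*) [CommRing S] [Algebra R S]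
    [UniqueFactorizationMonoid S] {g : R} [IsLocalization.Away g S] (hg : g ≠ 0)
    {p p' : Ideal R} [p.IsMaximal] {e : R} (he : e ≠ 0) (hp : p * p' = Ideal.span {e})
    (hp_fg : p.FG) (hpg : p ≤ (Ideal.span {g}).radical)
    (hc : c ≠ 0) (hIJ : I * J = Ideal.span {c}) :
    ∃ d ≠ 0, ∃ j : ℕ, I * p ^ j = Ideal.span {d} := by
  obtain ⟨d, hd, A, hA, hgA⟩ := exists_mul_eq_span_of_ufm_away S hg hc hIJ
  have hpA : p ≤ A.radical := hpg.trans
    (Ideal.radical_le_radical_iff.mpr ((Ideal.span_singleton_le_iff_mem _).mpr hgA))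
  obtain ⟨n, hn⟩ := Ideal.exists_pow_le_of_le_radical_of_fg hpA hp_fg
  obtain ⟨j, rfl⟩ := exists_eq_pow_of_pow_le he hp hn
  exact ⟨d, hd, j, hA⟩

end InvertibleIdeals

section UnitFractions

variable {F A S : Type*} [CommRing F] [CommRing A] [CommRing S] [Algebra F A] [Algebra F S]

/-- The subalgebra of the fractions `θ a / θ m` of `S` with `θ m` a unit, that is, the image in `S`
of the largest localization of `A` through which `θ` factors. -/
def unitFractions (θ : A →ₐ[F] S) : Subalgebra F S where
  carrier := {s | ∃ a m : A, IsUnit (θ m) ∧ θ m * s = θ a}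
  mul_mem' := by
    rintro s s' ⟨a, m, hm, h⟩ ⟨a', m', hm', h'⟩
    exact ⟨a * a', m * m', map_mul θ m m' ▸ hm.mul hm', by grind⟩
  add_mem' := by
    rintro s s' ⟨a, m, hm, h⟩ ⟨a', m', hm', h'⟩
    exact ⟨a * m' + a' * m, m * m', map_mul θ m m' ▸ hm.mul hm', by grind⟩
  algebraMap_mem' c := ⟨algebraMap F A c, 1, by simp, by simp⟩

variable {θ : A →ₐ[F] S}

theorem apply_mem_unitFractions (a : A) : θ a ∈ unitFractions θ := ⟨a, 1, by simp, by simp⟩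

theorem mem_unitFractions_of_isUnit_mul {s u : S} (hu : IsUnit u) (hu_mem : u ∈ unitFractions θ)
    (hus : u * s ∈ unitFractions θ) : s ∈ unitFractions θ := by
  obtain ⟨a, m, hm, h⟩ := hu_mem
  obtain ⟨a', m', hm', h'⟩ := hus
  exact ⟨a' * m, m' * a, by rw [map_mul, ← h]; exact hm'.mul (hm.mul hu), by grind⟩

theorem algebraMap_ratFunc_mem_unitFractions {F A S : Type*} [Field F] [CommRing A] [CommRing S]
    [Algebra F A] [Algebra F S] [Algebra (RatFunc F) S] [IsScalarTower F (RatFunc F) S]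
    {θ : A →ₐ[F] S} (hX : algebraMap (RatFunc F) S RatFunc.X ∈ unitFractions θ) (r : RatFunc F) :
    algebraMap (RatFunc F) S r ∈ unitFractions θ := by
  have hpoly (p : F[X]) : algebraMap (RatFunc F) S (algebraMap F[X] _ p) ∈ unitFractions θ := by
    have haeval : algebraMap (RatFunc F) S (algebraMap F[X] _ p) =
        aeval (algebraMap _ S (RatFunc.X : RatFunc F)) p := by
      rw [← RatFunc.algebraMap_X, aeval_algebraMap_apply, aeval_algebraMap_apply,
        aeval_X_left_apply]
    rw [haeval]
    exact Algebra.adjoin_le (Set.singleton_subset_iff.mpr hX) (aeval_mem_adjoin_singleton F _)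
  have hdenom : IsUnit (algebraMap (RatFunc F) S (algebraMap F[X] _ r.denom)) :=
    (RatFunc.algebraMap_ne_zero r.denom_ne_zero).isUnit.map _
  refine mem_unitFractions_of_isUnit_mul hdenom (hpoly _) ?_
  have hnum : algebraMap F[X] _ r.denom * r = algebraMap F[X] (RatFunc F) r.num := by
    rw [mul_comm, ← eq_div_iff (RatFunc.algebraMap_ne_zero r.denom_ne_zero), r.num_div_denom]
  rw [← map_mul, hnum]
  exact hpoly _

theorem uniqueFactorizationMonoid_of_unitFractions_eq_top [IsDomain A]
    [UniqueFactorizationMonoid A] (hθ : Function.Injective θ) (htop : unitFractions θ = ⊤) :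
    UniqueFactorizationMonoid S := by
  let := θ.toRingHom.toAlgebra
  let M : Submonoid A := (IsUnit.submonoid S).comap θ
  have : IsLocalization M S :=
    { map_units := fun m ↦ m.2
      surj := fun s ↦ by
        obtain ⟨a, m, hm, h⟩ : s ∈ unitFractions θ := htop ▸ Algebra.mem_top
        exact ⟨(a, ⟨m, hm⟩), (mul_comm _ _).trans h⟩
      exists_of_eq := fun {a b} hab ↦ ⟨1, by rw [hθ hab]⟩ }
  exact UniqueFactorizationMonoid.of_isLocalization M S

end UnitFractions

section CoordinateRing

open WeierstrassCurve WeierstrassCurve.Affine WeierstrassCurve.Affine.CoordinateRing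

section

variable {R : Type*} [CommRing R] (E : WeierstrassCurve.Affine R)

theorem equation_mk_X_mk_Y :
    (E.map (algebraMap R E.CoordinateRing)).Equation (mk E (C X)) (mk E Y) := by
  have h : mk E E.polynomial = 0 := AdjoinRoot.mk_self
  have hCC (c : R) : mk E (C (C c)) = algebraMap R E.CoordinateRing c := rfl
  simp only [WeierstrassCurve.Affine.polynomial, map_sub, map_add, map_mul, map_pow, hCC] at h
  rw [equation_iff, map_a₁, map_a₂, map_a₃, map_a₄, map_a₆]
  linear_combination h

variable {E}

theorem eq_top_of_mk_X_mem_of_mk_Y_mem {B : Subring E.CoordinateRing}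
    (hR : ∀ c, algebraMap R E.CoordinateRing c ∈ B) (hX : mk E (C X) ∈ B) (hY : mk E Y ∈ B) :
    B = ⊤ := by
  rw [eq_top_iff]
  rintro r -
  obtain ⟨p, rfl⟩ := AdjoinRoot.mk_surjective r
  have hC (q : R[X]) : mk E (C q) ∈ B := by
    induction q using Polynomial.induction_on with
    | C c => exact hR c
    | add q q' hq hq' => simpa only [map_add] using B.add_mem hq hq'
    | monomial n c _ =>
      simp only [map_mul, map_pow]
      exact B.mul_mem (hR c) (B.pow_mem hX (n + 1))
  induction p using Polynomial.induction_on with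
  | C q => exact hC q
  | add q q' hq hq' => simpa only [map_add] using B.add_mem hq hq'
  | monomial n q _ =>
    simp only [map_mul, map_pow]
    exact B.mul_mem (hC q) (B.pow_mem hY (n + 1))

/-- The evaluation of the coordinate ring at a point with coordinates in an extension `L` of the
base ring. -/
noncomputable def coordinateRingLift {L : Type*} [CommRing L] (φ : R →+* L) {x y : L}
    (h : (E.map φ).Equation x y) : E.CoordinateRing →+* L :=
  AdjoinRoot.lift (eval₂RingHom φ x) y
    (by rwa [Equation, map_polynomial, ← eval₂_eval₂RingHom_apply] at h)

variable {L : Type*} [CommRing L] {φ : R →+* L} {x y : L}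

theorem coordinateRingLift_algebraMap (h : (E.map φ).Equation x y) (c : R) :
    coordinateRingLift φ h (algebraMap R E.CoordinateRing c) = φ c :=
  (AdjoinRoot.lift_of _).trans (eval₂_C φ x)

theorem coordinateRingLift_mk_X (h : (E.map φ).Equation x y) :
    coordinateRingLift φ h (mk E (C X)) = x :=
  (AdjoinRoot.lift_of _).trans (eval₂_X φ x)

theorem coordinateRingLift_mk_Y (h : (E.map φ).Equation x y) :
    coordinateRingLift φ h (mk E Y) = y :=
  AdjoinRoot.lift_root _

end

variable {F : Type*} [Field F] {E : WeierstrassCurve.Affine F} {x y x₀ y₀ : F}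

theorem isMaximal_XYIdeal (h : E.Equation x y) : (XYIdeal E x (C y)).IsMaximal :=
  Ideal.Quotient.maximal_of_isField _
    ((quotientXYIdealEquiv h).toMulEquiv.isField (Field.toIsField F))

variable [DecidableEq F]

theorem some_add_nsmul_some_eq_zero (h : E.Nonsingular x y) (h₀ : E.Nonsingular x₀ y₀) {j : ℕ}
    {d : E.CoordinateRing} (hd : d ≠ 0)
    (hspan : XYIdeal E x (C y) * XYIdeal E x₀ (C y₀) ^ j = Ideal.span {d}) :
    (.some x y h + j • .some x₀ y₀ h₀ : E.Point) = 0 := by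
  rw [← Point.toClass_eq_zero, map_add, map_nsmul, Point.toClass_some, Point.toClass_some]
  have hclass : ClassGroup.mk E.FunctionField (XYIdeal' h * XYIdeal' h₀ ^ j) = 1 := by
    refine (ClassGroup.mk_eq_one_of_coe_ideal
      (I' := XYIdeal E x (C y) * XYIdeal E x₀ (C y₀) ^ j) ?_).mpr ⟨d, hd, hspan⟩
    simp only [Units.val_mul, Units.val_pow_eq_pow_val, XYIdeal'_eq, FractionalIdeal.coeIdeal_mul,
      FractionalIdeal.coeIdeal_pow]
  rw [map_mul, map_pow] at hclass
  exact congrArg Additive.ofMul hclass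

theorem mem_zmultiples_some_of_ufm_away (S : Type*) [CommRing S] [Algebra E.CoordinateRing S]
    {g : E.CoordinateRing} [IsLocalization.Away g S] [UniqueFactorizationMonoid S] (hg : g ≠ 0)
    (h₀ : E.Nonsingular x₀ y₀) (hg_rad : XYIdeal E x₀ (C y₀) ≤ (Ideal.span {g}).radical)
    (P : E.Point) : P ∈ AddSubgroup.zmultiples (.some x₀ y₀ h₀ : E.Point) := by
  rcases P with _ | ⟨x, y, h⟩
  · exact zero_mem _
  have hinv {x y : F} (h : E.Nonsingular x y) : XYIdeal E x (C y) * XYIdeal E x (C (E.negY x y)) =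
      Ideal.span {XClass E x} := by
    rw [mul_comm, XYIdeal_neg_mul h, XIdeal]
  have := isMaximal_XYIdeal h₀.1
  obtain ⟨d, hd, j, hspan⟩ := exists_mul_pow_eq_span S hg (XClass_ne_zero x₀) (hinv h₀)
    (Submodule.fg_span (by simp)) hg_rad (XClass_ne_zero x) (hinv h)
  rw [eq_neg_of_add_eq_zero_left (some_add_nsmul_some_eq_zero h h₀ hd hspan)]
  exact neg_mem (nsmul_mem (AddSubgroup.mem_zmultiples _) j)

end CoordinateRing

section TateFive

open WeierstrassCurve WeierstrassCurve.Affine WeierstrassCurve.Affine.CoordinateRing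

/-- The Tate normal form of an elliptic curve with a point of order five, the point being `(0, 0)`:
over the `s`-line this is the universal elliptic curve over the modular curve `X₁(5)`. -/
def tateFive {R : Type*} [CommRing R] (s : R) : WeierstrassCurve.Affine R := ⟨s + 1, s, s, 0, 0⟩

/-- The numerator of `s` as a function of a point `(x, y)` of `tateFive s`. -/
def paramNum {R : Type*} [CommRing R] (x y : R) : R := x ^ 3 - y ^ 2 - x * y

/-- The denominator of `s` as a function of a point `(x, y)` of `tateFive s`. -/
def paramDen {R : Type*} [CommRing R] (x y : R) : R := x * y + y - x ^ 2

section

variable {R R' : Type*} [CommRing R] [CommRing R'] {s x y : R}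

theorem map_tateFive (f : R →+* R') (s : R) : (tateFive s).map f = tateFive (f s) := by
  simp [tateFive, WeierstrassCurve.map]

theorem equation_tateFive_iff : (tateFive s).Equation x y ↔ s * paramDen x y = paramNum x y := by
  simp only [tateFive, equation_iff, paramNum, paramDen]
  constructor <;> intro h <;> linear_combination h

@[simp]
theorem map_paramNum {G : Type*} [FunLike G R R'] [RingHomClass G R R'] (f : G) (x y : R) :
    f (paramNum x y) = paramNum (f x) (f y) := by
  simp [paramNum]

@[simp]
theorem map_paramDen {G : Type*} [FunLike G R R'] [RingHomClass G R R'] (f : G) (x y : R) :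
    f (paramDen x y) = paramDen (f x) (f y) := by
  simp [paramDen]

theorem paramDen_dvd_pow_five (h : paramDen x y ∣ paramNum x y) : paramDen x y ∣ x ^ 5 := by
  have hpow : x ^ 5 = paramNum x y * (x + 1) ^ 2 +
      paramDen x y * (paramDen x y + 2 * x ^ 2 + x * (x + 1)) := by
    simp only [paramNum, paramDen]
    ring
  rw [hpow]
  exact dvd_add (h.mul_right _) (dvd_mul_right _ _)

end

theorem transcendental_div_of_not_dvd (F : Type*) {A L : Type*} [Field F] [CommRing A]
    [IsIntegrallyClosed A] [Algebra F A] [Field L] [Algebra A L] [IsFractionRing A L] [Algebra F L]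
    [IsScalarTower F A L] {a b : A} (hb : b ≠ 0) (hab : ¬ b ∣ a) :
    Transcendental F (algebraMap A L a / algebraMap A L b) := by
  intro halg
  have hint : IsIntegral A (algebraMap A L a / algebraMap A L b) := halg.isIntegral.tower_top
  obtain ⟨c, hc⟩ := IsIntegrallyClosed.isIntegral_iff.mp hint
  have hb' : algebraMap A L b ≠ 0 := (map_ne_zero_iff _ (IsFractionRing.injective A L)).mpr hb
  refine hab ⟨c, IsFractionRing.injective A L ?_⟩
  rw [map_mul, hc, mul_div_cancel₀ _ hb']

section

variable {F : Type*} [Field F]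

theorem natDegree_paramDen : (paramDen (C X) Y : F[X][Y]).natDegree = 1 := by
  have h : (paramDen (C X) Y : F[X][Y]) = C (X + C 1) * Y + C (-X ^ 2) := by
    simp only [paramDen, map_add, map_neg, map_pow, map_one]
    ring
  rw [h, natDegree_linear (X_add_C_ne_zero (1 : F))]

theorem paramDen_ne_zero : (paramDen (C X) Y : F[X][Y]) ≠ 0 :=
  ne_zero_of_natDegree_gt (n := 0) (by simp [natDegree_paramDen])

theorem not_paramDen_dvd_paramNum : ¬ (paramDen (C X) Y : F[X][Y]) ∣ paramNum (C X) Y := by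
  intro h
  have hle := natDegree_le_of_dvd (paramDen_dvd_pow_five h) (by simp)
  rw [natDegree_paramDen, ← C_pow, natDegree_C] at hle
  exact absurd hle (by norm_num)

theorem exists_ratFunc_algHom_X_eq {L : Type*} [Field L] [Algebra F L] {z : L}
    (hz : Transcendental F z) : ∃ φ : RatFunc F →ₐ[F] L, φ RatFunc.X = z := by
  have hinj : Function.Injective (aeval z : F[X] →ₐ[F] L) := transcendental_iff_injective.mp hz
  refine ⟨RatFunc.liftAlgHom (aeval z)
    (nonZeroDivisors_le_comap_nonZeroDivisors_of_injective _ hinj), ?_⟩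
  simp [RatFunc.liftAlgHom_apply]

variable (F) in
/-- The curve `tateFive` over the field of rational functions in its parameter. -/
noncomputable abbrev genericTateFive : WeierstrassCurve.Affine (RatFunc F) := tateFive RatFunc.X

variable (F) in
/-- The embedding of the polynomial ring of the `(x, y)`-plane over `F` in the coordinate ring of
the generic curve. It is birational, since the parameter is the function `paramNum / paramDen`. -/
noncomputable abbrev planeToCoordinateRing : F[X][Y] →ₐ[F] (genericTateFive F).CoordinateRing :=
  aevalAeval (mk (genericTateFive F) (C X)) (mk (genericTateFive F) Y)

theorem planeToCoordinateRing_injective : Function.Injective (planeToCoordinateRing F) := by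
  let L := FractionRing F[X][Y]
  obtain ⟨φ, hφ⟩ := exists_ratFunc_algHom_X_eq (transcendental_div_of_not_dvd F (L := L)
    (paramDen_ne_zero (F := F)) not_paramDen_dvd_paramNum)
  have heq : ((tateFive RatFunc.X).map (φ : RatFunc F →+* L)).Equation
      (algebraMap F[X][Y] L (C X)) (algebraMap F[X][Y] L Y) := by
    have hden : algebraMap F[X][Y] L (paramDen (C X) Y) ≠ 0 :=
      (map_ne_zero_iff _ (IsFractionRing.injective _ L)).mpr paramDen_ne_zero
    rw [map_tateFive, equation_tateFive_iff, ← map_paramNum, ← map_paramDen, RingHom.coe_coe, hφ,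
      div_mul_cancel₀ _ hden]
  have hcomp :
      (coordinateRingLift _ heq).comp (planeToCoordinateRing F) = algebraMap F[X][Y] L := by
    ext c
    · rw [RingHom.comp_apply, RingHom.comp_apply, RingHom.comp_apply, RingHom.coe_coe, aevalAeval_C,
        aeval_C, IsScalarTower.algebraMap_apply F (RatFunc F), coordinateRingLift_algebraMap,
        RingHom.coe_coe, AlgHom.commutes]
      rfl
    · exact (congrArg _ (aevalAeval_X _ _)).trans (coordinateRingLift_mk_X heq)
    · exact (congrArg _ (aevalAeval_Y _ _)).trans (coordinateRingLift_mk_Y heq)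
  refine Function.Injective.of_comp (f := coordinateRingLift _ heq) ?_
  have hinj := IsFractionRing.injective F[X][Y] L
  rwa [← hcomp] at hinj

variable (F) in
/-- The denominator of the parameter in the coordinate ring of the generic curve; it vanishes only
at the point `(0, 0)`. -/
noncomputable abbrev genericDen : (genericTateFive F).CoordinateRing :=
  planeToCoordinateRing F (paramDen (C X) Y)

theorem genericDen_ne_zero : genericDen F ≠ 0 :=
  (map_ne_zero_iff _ planeToCoordinateRing_injective).mpr paramDen_ne_zero

theorem algebraMap_X_mul_genericDen :
    algebraMap (RatFunc F) _ RatFunc.X * genericDen F =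
      planeToCoordinateRing F (paramNum (C X) Y) := by
  have h := equation_mk_X_mk_Y (genericTateFive F)
  rw [map_tateFive, equation_tateFive_iff] at h
  rw [genericDen, map_paramNum, map_paramDen, aevalAeval_X, aevalAeval_Y, h]

theorem XYIdeal_le_radical_genericDen :
    XYIdeal (genericTateFive F) 0 (C 0) ≤ (Ideal.span {genericDen F}).radical := by
  have hXpow : genericDen F ∣ mk (genericTateFive F) (C X) ^ 5 := by
    rw [genericDen, map_paramDen, aevalAeval_X, aevalAeval_Y]
    refine paramDen_dvd_pow_five ⟨algebraMap (RatFunc F) _ RatFunc.X, ?_⟩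
    simpa [mul_comm] using algebraMap_X_mul_genericDen.symm
  have hX : mk (genericTateFive F) (C X) ∈ (Ideal.span {genericDen F}).radical :=
    ⟨5, Ideal.mem_span_singleton.mpr hXpow⟩
  have hY : mk (genericTateFive F) Y ∈ (Ideal.span {genericDen F}).radical := by
    have hY_eq : mk (genericTateFive F) Y = genericDen F + (mk (genericTateFive F) (C X) -
        mk (genericTateFive F) Y) * mk (genericTateFive F) (C X) := by
      rw [genericDen, map_paramDen, aevalAeval_X, aevalAeval_Y, paramDen]
      ring
    rw [hY_eq]
    exact add_mem (Ideal.le_radical (Ideal.mem_span_singleton_self _)) (Ideal.mul_mem_left _ _ hX)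
  rw [XYIdeal, Ideal.span_le, Set.pair_subset_iff, XClass, YClass, C_0, C_0, sub_zero, sub_zero]
  exact ⟨hX, hY⟩

variable (F) in
/-- The coordinate ring of the complement of `(0, 0)` in the affine generic curve, encoded as the
localization at `genericDen F`. -/
abbrev GenericAway : Type _ := Localization.Away (genericDen F)

variable (F) in
/-- The embedding of the polynomial ring of the `(x, y)`-plane in the localization `GenericAway F`,
all of whose elements become fractions of plane polynomials with invertible denominators. -/
noncomputable abbrev planeToAway : F[X][Y] →ₐ[F] GenericAway F :=
  (IsScalarTower.toAlgHom F (genericTateFive F).CoordinateRing _).comp (planeToCoordinateRing F)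

theorem unitFractions_planeToAway : unitFractions (planeToAway F) = ⊤ := by
  have hden : IsUnit (planeToAway F (paramDen (C X) Y)) :=
    IsLocalization.Away.algebraMap_isUnit (genericDen F)
  have hX : algebraMap (RatFunc F) (GenericAway F) RatFunc.X ∈ unitFractions (planeToAway F) := by
    refine mem_unitFractions_of_isUnit_mul hden (apply_mem_unitFractions _) ?_
    convert apply_mem_unitFractions (θ := planeToAway F) (paramNum (C X) Y) using 1
    rw [mul_comm, IsScalarTower.algebraMap_apply _ (genericTateFive F).CoordinateRing]
    exact (map_mul _ _ _).symm.trans (congrArg _ algebraMap_X_mul_genericDen)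
  let B := (unitFractions (planeToAway F)).toSubring.comap
    (algebraMap (genericTateFive F).CoordinateRing (GenericAway F))
  have hB : B = ⊤ := eq_top_of_mk_X_mem_of_mk_Y_mem
    (fun r ↦ algebraMap_ratFunc_mem_unitFractions hX r)
    ⟨C X, 1, by simp, by simp⟩ ⟨Y, 1, by simp, by simp⟩
  rw [eq_top_iff]
  rintro s -
  obtain ⟨n, a, ha⟩ := IsLocalization.Away.surj (genericDen F) s
  have haB : a ∈ B := hB ▸ Subring.mem_top a
  exact mem_unitFractions_of_isUnit_mul (hden.pow n) (pow_mem (apply_mem_unitFractions _) n)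
    ((mul_comm _ _).trans ha ▸ haB)

instance : UniqueFactorizationMonoid (GenericAway F) := by
  refine uniqueFactorizationMonoid_of_unitFractions_eq_top (θ := planeToAway F) ?_
    unitFractions_planeToAway
  exact (IsLocalization.injective _
    (powers_le_nonZeroDivisors_of_noZeroDivisors genericDen_ne_zero)).comp
      planeToCoordinateRing_injective

end

end TateFive

section Verschiebung

open WeierstrassCurve WeierstrassCurve.Affine

variable {F : Type*} [Field F] (E : WeierstrassCurve.Affine F)

/-- The numerator of the `x`-coordinate of the Verschiebung from the Frobenius twist of a
Weierstrass curve `E` in characteristic two to `E`, as a function of the `x`-coordinate on the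
twist. Together with `verschiebungDen` it is the square root of the duplication formula. -/
def verschiebungNum (x : F) : F := x ^ 2 + E.b₄ * x + E.b₈

/-- The denominator of the `x`-coordinate of the Verschiebung from the Frobenius twist of a
Weierstrass curve `E` in characteristic two to `E`, as a function of the `x`-coordinate on the
twist. -/
def verschiebungDen (x : F) : F := E.b₂ * x + E.b₆

variable [CharP F 2] {E} {E' : WeierstrassCurve.Affine F} {x y : F}

theorem sub_negY_eq_verschiebungDen (hE : E' = E.map (frobenius F 2)) :
    y - E'.negY x y = verschiebungDen E x := by
  simp only [hE, negY, map_a₁, map_a₃, frobenius_def, verschiebungDen, b₂, b₆]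
  grind

theorem exists_equation_verschiebung (hE : E' = E.map (frobenius F 2)) (h : E'.Equation x y)
    (hx : verschiebungDen E x ≠ 0) :
    ∃ v, E.Equation (verschiebungNum E x / verschiebungDen E x) v := by
  -- A square root of the `y`-coordinate of `-2 • (x, y)`.
  let v : F := ((E.a₁ * x ^ 2 + E.a₁ * E.b₈ + E.a₃ ^ 3) * (y + E.a₂ * x + E.a₆) + (x + E.a₄) *
    (E.a₁ * x * verschiebungDen E x + E.a₃ * verschiebungNum E x)) / verschiebungDen E x ^ 2
  refine ⟨v, ?_⟩
  simp only [hE, equation_iff, map_a₁, map_a₂, map_a₃, map_a₄, map_a₆, frobenius_def] at h ⊢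
  unfold v
  field_simp
  simp only [verschiebungNum, verschiebungDen, b₂, b₄, b₆, b₈]
  grind

variable [DecidableEq F]

theorem two_nsmul_some_eq_zero_of_verschiebungDen_eq_zero (hE : E' = E.map (frobenius F 2))
    (h : E'.Nonsingular x y) (hx : verschiebungDen E x = 0) : (2 • .some x y h : E'.Point) = 0 := by
  rw [two_nsmul]
  exact Point.add_self_of_Y_eq (sub_eq_zero.mp ((sub_negY_eq_verschiebungDen hE).trans hx))

theorem exists_two_nsmul_some_eq_verschiebung_sq (hE : E' = E.map (frobenius F 2))
    (h : E'.Nonsingular x y) (hx : verschiebungDen E x ≠ 0) :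
    ∃ y' h', (2 • .some x y h : E'.Point) =
      .some ((verschiebungNum E x / verschiebungDen E x) ^ 2) y' h' := by
  have hY : y ≠ E'.negY x y := by rwa [← sub_ne_zero, sub_negY_eq_verschiebungDen hE]
  have hX : E'.addX x x (E'.slope x x y y) =
      (verschiebungNum E x / verschiebungDen E x) ^ 2 := by
    have heq := h.1
    rw [slope_of_Y_ne rfl hY, sub_negY_eq_verschiebungDen hE]
    simp only [hE, addX, equation_iff, map_a₁, map_a₂, map_a₃, map_a₄, map_a₆, frobenius_def]
      at heq ⊢
    field_simp
    simp only [verschiebungNum, verschiebungDen, b₂, b₄, b₆, b₈]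
    grind
  rw [two_nsmul, ← hX]
  exact ⟨_, _, Point.add_self_of_Y_ne hY⟩

end Verschiebung

section OrderFive

open WeierstrassCurve WeierstrassCurve.Affine

variable {F : Type*} [Field F] {s : F}

theorem nonsingular_tateFive_zero (hs : s ≠ 0) : (tateFive s).Nonsingular 0 0 := by
  simp [tateFive, nonsingular_zero, hs]

/-- The distinguished point `(0, 0)` of order five. -/
def tateFivePoint (hs : s ≠ 0) : (tateFive s).Point :=
  .some 0 0 (nonsingular_tateFive_zero hs)

theorem Δ_tateFive (s : F) : (tateFive s).Δ = -s ^ 5 * (s ^ 2 + 11 * s - 1) := by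
  simp only [tateFive, Δ, b₂, b₄, b₆, b₈]
  ring

variable [DecidableEq F] (hs : s ≠ 0)

theorem exists_two_nsmul_tateFivePoint : ∃ h, 2 • tateFivePoint hs = .some (-s) (s ^ 2) h := by
  have hY : (0 : F) ≠ (tateFive s).negY 0 0 := by simpa [tateFive, negY] using hs
  have hslope : (tateFive s).slope 0 0 0 0 = 0 := by
    rw [slope_of_Y_ne rfl hY]
    simp [tateFive]
  have hX : (tateFive s).addX 0 0 ((tateFive s).slope 0 0 0 0) = -s := by
    rw [hslope]
    simp [tateFive, addX]
  have hY' : (tateFive s).addY 0 0 0 ((tateFive s).slope 0 0 0 0) = s ^ 2 := by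
    rw [hslope]
    simp only [tateFive, addY, negAddY, addX, negY]
    ring
  rw [two_nsmul, ← hX, ← hY']
  exact ⟨_, Point.add_self_of_Y_ne hY⟩

theorem three_nsmul_tateFivePoint :
    (3 • tateFivePoint hs : (tateFive s).Point) = -(2 • tateFivePoint hs) := by
  obtain ⟨h, htwo⟩ := exists_two_nsmul_tateFivePoint hs
  have hslope : (tateFive s).slope (-s) 0 (s ^ 2) 0 = -s := by
    rw [slope_of_X_ne (neg_ne_zero.mpr hs), sub_zero, sub_zero, div_eq_iff (neg_ne_zero.mpr hs)]
    ring
  rw [succ_nsmul _ 2, htwo, tateFivePoint, Point.add_of_X_ne (neg_ne_zero.mpr hs), Point.neg_some]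
  congr 1 <;> rw [hslope] <;> simp only [tateFive, addY, negAddY, addX, negY] <;> ring

theorem addOrderOf_tateFivePoint : addOrderOf (tateFivePoint hs) = 5 := by
  have : Fact (Nat.Prime 5) := ⟨by norm_num⟩
  refine addOrderOf_eq_prime ?_ (Point.some_ne_zero _)
  rw [show 5 = 2 + 3 from rfl, add_nsmul, three_nsmul_tateFivePoint, add_neg_cancel]

theorem some_mem_zmultiples_tateFivePoint_iff {x y : F} (h : (tateFive s).Nonsingular x y) :
    .some x y h ∈ AddSubgroup.zmultiples (tateFivePoint hs) ↔ x = 0 ∨ x = -s := by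
  obtain ⟨h₂, htwo⟩ := exists_two_nsmul_tateFivePoint hs
  have hfour : (4 • tateFivePoint hs : (tateFive s).Point) = -tateFivePoint hs := by
    rw [succ_nsmul _ 3, three_nsmul_tateFivePoint]
    abel
  constructor
  · intro hmem
    have hfin : IsOfFinAddOrder (tateFivePoint hs) :=
      addOrderOf_pos_iff.mp (addOrderOf_tateFivePoint hs ▸ Nat.succ_pos 4)
    rw [hfin.mem_zmultiples_iff_mem_range_addOrderOf, Finset.mem_image] at hmem
    obtain ⟨n, hn, heq⟩ := hmem
    rw [addOrderOf_tateFivePoint, Finset.mem_range] at hn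
    interval_cases n
    · exact absurd heq.symm (Point.some_ne_zero h)
    · rw [one_nsmul, tateFivePoint, Point.some.injEq] at heq
      exact .inl heq.1.symm
    · rw [htwo, Point.some.injEq] at heq
      exact .inr heq.1.symm
    · rw [three_nsmul_tateFivePoint, htwo, Point.neg_some, Point.some.injEq] at heq
      exact .inr heq.1.symm
    · rw [hfour, tateFivePoint, Point.neg_some, Point.some.injEq] at heq
      exact .inl heq.1.symm
  · have hmem := AddSubgroup.mem_zmultiples (tateFivePoint hs)
    rintro (rfl | rfl)
    · rcases (Point.X_eq_iff (h₁ := h) (h₂ := nonsingular_tateFive_zero hs)).mp rfl with heq | heq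
      · exact heq ▸ hmem
      · exact heq ▸ neg_mem hmem
    · rcases (Point.X_eq_iff (h₁ := h) (h₂ := h₂)).mp rfl with heq | heq
      · exact heq ▸ htwo ▸ nsmul_mem hmem 2
      · exact heq ▸ htwo ▸ neg_mem (nsmul_mem hmem 2)

end OrderFive

section OrderTwo

open WeierstrassCurve WeierstrassCurve.Affine

theorem nonempty_addEquiv_zmod_of_coprime {G : Type*} [AddCommGroup G] {P T : G} {m n : ℕ}
    (hP : addOrderOf P = m) (hT : addOrderOf T = n) (hmn : m.Coprime n)
    (hsmul : ∀ Q : G, n • Q ∈ AddSubgroup.zmultiples P)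
    (htorsion : ∀ Q : G, n • Q = 0 → Q ∈ AddSubgroup.zmultiples T) :
    Nonempty (G ≃+ ZMod (m * n)) := by
  have horder : addOrderOf (P + T) = m * n := by
    rw [← hP, ← hT] at hmn ⊢
    exact (AddCommute.all P T).addOrderOf_add_eq_mul_addOrderOf_of_coprime hmn
  obtain ⟨a, b, hab⟩ := Nat.isCoprime_iff_coprime.mpr hmn
  have hmP : (m : ℤ) • P = 0 := by rw [natCast_zsmul, ← hP, addOrderOf_nsmul_eq_zero]
  have hnT : (n : ℤ) • T = 0 := by rw [natCast_zsmul, ← hT, addOrderOf_nsmul_eq_zero]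
  have hbez (Q : G) : Q = a • (m : ℤ) • Q + b • (n : ℤ) • Q := by
    rw [← mul_smul, ← mul_smul, ← add_zsmul, hab, one_zsmul]
  have hPmem : P ∈ AddSubgroup.zmultiples (P + T) := by
    refine AddSubgroup.mem_zmultiples_iff.mpr ⟨b * n, ?_⟩
    rw [mul_smul, smul_add, hnT, add_zero]
    conv_rhs => rw [hbez P, hmP, smul_zero, zero_add]
  have hTmem : T ∈ AddSubgroup.zmultiples (P + T) := by
    refine AddSubgroup.mem_zmultiples_iff.mpr ⟨a * m, ?_⟩
    rw [mul_smul, smul_add, hmP, zero_add]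
    conv_rhs => rw [hbez T, hnT, smul_zero, add_zero]
  have hgen (Q : G) : Q ∈ AddSubgroup.zmultiples (P + T) := by
    have hmQ : (m : ℤ) • Q ∈ AddSubgroup.zmultiples T := by
      obtain ⟨c, hc⟩ := AddSubgroup.mem_zmultiples_iff.mp (hsmul Q)
      refine htorsion _ ?_
      rw [smul_comm, ← hc, smul_comm, hmP, smul_zero]
    have hnQ : (n : ℤ) • Q ∈ AddSubgroup.zmultiples P := natCast_zsmul Q n ▸ hsmul Q
    rw [hbez Q]
    exact add_mem (zsmul_mem (AddSubgroup.zmultiples_le_of_mem hTmem hmQ) _)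
      (zsmul_mem (AddSubgroup.zmultiples_le_of_mem hPmem hnQ) _)
  exact ⟨(zmodAddEquivOfGenerator hgen
    ((addOrderOf_eq_card_of_forall_mem_zmultiples hgen).symm.trans horder)).symm⟩

variable {F : Type*} [Field F] [CharP F 2] {s : F}

theorem tateFive_sq_eq_map_frobenius : tateFive (s ^ 2) = (tateFive s).map (frobenius F 2) := by
  rw [map_tateFive, frobenius_def]

theorem verschiebungDen_tateFive (x : F) :
    verschiebungDen (tateFive s) x = (s + 1) ^ 2 * x + s ^ 2 := by
  simp only [verschiebungDen, tateFive, b₂, b₆]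
  grind

theorem verschiebungDen_tateFive_eq_zero_iff (hs₁ : s + 1 ≠ 0) {x : F} :
    verschiebungDen (tateFive s) x = 0 ↔ x = s ^ 2 / (s + 1) ^ 2 := by
  rw [verschiebungDen_tateFive, eq_div_iff (pow_ne_zero 2 hs₁), mul_comm, CharTwo.add_eq_zero]

theorem nonsingular_tateFive_sq_orderTwo (hs₁ : s + 1 ≠ 0) (hΔ : (tateFive s).Δ ≠ 0) :
    (tateFive (s ^ 2)).Nonsingular (s ^ 2 / (s + 1) ^ 2) (s ^ 4 / (s + 1) ^ 3) := by
  rw [← equation_iff_nonsingular_of_Δ_ne_zero, equation_tateFive_iff]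
  · simp only [paramDen, paramNum]
    field_simp
    grind
  · rw [tateFive_sq_eq_map_frobenius, map_Δ]
    exact (_root_.map_ne_zero _).mpr hΔ

/-- The point of order two of `tateFive (s ^ 2)`, which generates the kernel of the
Verschiebung. -/
def orderTwoPoint (hs₁ : s + 1 ≠ 0) (hΔ : (tateFive s).Δ ≠ 0) : (tateFive (s ^ 2)).Point :=
  .some _ _ (nonsingular_tateFive_sq_orderTwo hs₁ hΔ)

variable [DecidableEq F]

theorem addOrderOf_orderTwoPoint (hs₁ : s + 1 ≠ 0) (hΔ : (tateFive s).Δ ≠ 0) :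
    addOrderOf (orderTwoPoint hs₁ hΔ) = 2 :=
  addOrderOf_eq_prime (two_nsmul_some_eq_zero_of_verschiebungDen_eq_zero
    tateFive_sq_eq_map_frobenius _ ((verschiebungDen_tateFive_eq_zero_iff hs₁).mpr rfl))
    (Point.some_ne_zero _)

theorem mem_zmultiples_orderTwoPoint (hs₁ : s + 1 ≠ 0) (hΔ : (tateFive s).Δ ≠ 0)
    {Q : (tateFive (s ^ 2)).Point} (hQ : 2 • Q = 0) :
    Q ∈ AddSubgroup.zmultiples (orderTwoPoint hs₁ hΔ) := by
  rcases Q with _ | ⟨x, y, h⟩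
  · exact zero_mem _
  have hx : verschiebungDen (tateFive s) x = 0 := by
    by_contra hx
    obtain ⟨y', h', htwo⟩ := exists_two_nsmul_some_eq_verschiebung_sq
      tateFive_sq_eq_map_frobenius h hx
    exact Point.some_ne_zero h' (htwo.symm.trans hQ)
  rcases (Point.X_eq_iff (h₁ := h) (h₂ := nonsingular_tateFive_sq_orderTwo hs₁ hΔ)).mp
      ((verschiebungDen_tateFive_eq_zero_iff hs₁).mp hx) with hT | hT
  · exact hT ▸ AddSubgroup.mem_zmultiples _
  · exact hT ▸ neg_mem (AddSubgroup.mem_zmultiples _)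

theorem two_nsmul_mem_zmultiples_tateFivePoint (hs₀ : s ≠ 0) (hΔ : (tateFive s).Δ ≠ 0)
    (hgen : ∀ P : (tateFive s).Point, P ∈ AddSubgroup.zmultiples (tateFivePoint hs₀))
    (Q : (tateFive (s ^ 2)).Point) :
    2 • Q ∈ AddSubgroup.zmultiples (tateFivePoint (pow_ne_zero 2 hs₀)) := by
  rcases Q with _ | ⟨x, y, h⟩
  · exact zero_mem _
  have hE := tateFive_sq_eq_map_frobenius (s := s)
  by_cases hx : verschiebungDen (tateFive s) x = 0
  · rw [two_nsmul_some_eq_zero_of_verschiebungDen_eq_zero hE h hx]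
    exact zero_mem _
  obtain ⟨v, hv⟩ := exists_equation_verschiebung hE h.1 hx
  have hu := (some_mem_zmultiples_tateFivePoint_iff hs₀
    ((equation_iff_nonsingular_of_Δ_ne_zero hΔ).mp hv)).mp (hgen _)
  obtain ⟨y', h', htwo⟩ := exists_two_nsmul_some_eq_verschiebung_sq hE h hx
  rw [htwo, some_mem_zmultiples_tateFivePoint_iff]
  rcases hu with hu | hu <;> simp [hu, CharTwo.neg_eq]

theorem nonempty_point_tateFive_sq_addEquiv_zmod_ten (hs₀ : s ≠ 0) (hs₁ : s + 1 ≠ 0)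
    (hΔ : (tateFive s).Δ ≠ 0)
    (hgen : ∀ P : (tateFive s).Point, P ∈ AddSubgroup.zmultiples (tateFivePoint hs₀)) :
    Nonempty ((tateFive (s ^ 2)).Point ≃+ ZMod 10) :=
  nonempty_addEquiv_zmod_of_coprime (addOrderOf_tateFivePoint _) (addOrderOf_orderTwoPoint hs₁ hΔ)
    (by norm_num) (two_nsmul_mem_zmultiples_tateFivePoint hs₀ hΔ hgen)
    fun _ ↦ mem_zmultiples_orderTwoPoint hs₁ hΔ

end OrderTwo

section Generic

variable {F : Type*} [Field F]

theorem mem_zmultiples_genericTateFive [DecidableEq (RatFunc F)] (P : (genericTateFive F).Point) :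
    P ∈ AddSubgroup.zmultiples (tateFivePoint (RatFunc.X_ne_zero (K := F))) :=
  mem_zmultiples_some_of_ufm_away (GenericAway F) (g := genericDen F) genericDen_ne_zero
    (nonsingular_tateFive_zero RatFunc.X_ne_zero) XYIdeal_le_radical_genericDen P

theorem Δ_genericTateFive_ne_zero : (genericTateFive F).Δ ≠ 0 := by
  have hmonic : (X ^ 2 + 11 * X - 1 : F[X]).Monic := by monicity!
  have hquad : (RatFunc.X ^ 2 + 11 * RatFunc.X - 1 : RatFunc F) ≠ 0 := by
    simpa [map_ofNat] using RatFunc.algebraMap_ne_zero hmonic.ne_zero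
  rw [Δ_tateFive]
  exact mul_ne_zero (neg_ne_zero.mpr (pow_ne_zero 5 RatFunc.X_ne_zero)) hquad

theorem ratFunc_X_add_one_ne_zero : (RatFunc.X + 1 : RatFunc F) ≠ 0 := by
  simpa using RatFunc.algebraMap_ne_zero (X_add_C_ne_zero (1 : F))

end Generic

theorem points_iso_zmod_ten_general (F : Type*) [Field F] [CharP F 2] [DecidableEq (RatFunc F)] :
    Nonempty ((tateFive (RatFunc.X ^ 2 : RatFunc F)).Point ≃+ ZMod 10) := by
  have : CharP (RatFunc F) 2 := charP_of_injective_algebraMap (algebraMap F _).injective 2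
  exact nonempty_point_tateFive_sq_addEquiv_zmod_ten RatFunc.X_ne_zero ratFunc_X_add_one_ne_zero
    Δ_genericTateFive_ne_zero mem_zmultiples_genericTateFive

open scoped Classical in
/-- The group of points of `W : y² + (t²+1)xy + t²y = x³ + t²x²` over `K = k(t)` is isomorphic to `ℤ/10ℤ`. -/
theorem points_iso_zmod_ten : Nonempty (W.Point ≃+ (ZMod 10)) := by
  exact points_iso_zmod_ten_general k
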